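/- arXiv:2204.09156 — 2 statements merged into one kernel-verified Lean document; each statement's English description precedes it below -/
import Mathlib

section
/- Let p > 1, 0 ≤ a < 1, C > 0, δ > 0, and T > 1. Suppose F : [1,T) → ℝ is differentiable with F(M) ≥ 0 and M^{a} F'(M) ≥ C (δ + F(M))^{p} for all M ∈ [1,T). Then T^{1−a} ≤ 1 + ((1−a)/(C(p−1))) δ^{1−p}; in particular there is a constant C' = C'(a, p, C) such that T ≤ C' max(1, δ^{−(p−1)/(1−a)}). -/
open Real Set

/-- **ODE blow-up lemma, subcritical case** (Fino–Hamza): if `F ≥ 0` is differentiable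
on `[1,T)` with `M^a F'(M) ≥ C (δ + F(M))^p` there, where `p > 1`, `0 ≤ a < 1`,
`C, δ > 0`, then `T^{1-a} ≤ 1 + ((1-a)/(C(p-1))) δ^{1-p}`; in particular
`T ≤ C' max(1, δ^{-(p-1)/(1-a)})` with `C' = C'(a,p,C)`. -/
theorem ode_blowup_subcritical
    (p a C : ℝ) (hp : 1 < p) (ha0 : 0 ≤ a) (ha1 : a < 1) (hC : 0 < C) :
    ∃ C' > (0 : ℝ), ∀ (δ T : ℝ) (F : ℝ → ℝ), 0 < δ → 1 < T →
      (∀ M ∈ Set.Ico (1 : ℝ) T, DifferentiableAt ℝ F M) →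
      (∀ M ∈ Set.Ico (1 : ℝ) T, 0 ≤ F M) →
      (∀ M ∈ Set.Ico (1 : ℝ) T, C * (δ + F M) ^ p ≤ M ^ a * deriv F M) →
      T ^ (1 - a) ≤ 1 + ((1 - a) / (C * (p - 1))) * δ ^ (1 - p) ∧
      T ≤ C' * max 1 (δ ^ (-(p - 1) / (1 - a))) := by
  have h1a : 0 < 1 - a := by linarith
  have hp1 : 0 < p - 1 := by linarith
  obtain ⟨K, hK⟩ : ∃ K, K = (1 - a) / (C * (p - 1)) := ⟨_, rfl⟩
  have hKpos : 0 < K := by rw [hK]; positivity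
  have hKC : K * (p - 1) * C = 1 - a := by rw [hK]; field_simp
  rw [← hK]
  refine ⟨(1 + K) ^ (1 / (1 - a)), by positivity, ?_⟩
  intro δ T F hδ hT hd hF hode
  have hB1 : 1 ≤ 1 + K * δ ^ (1 - p) := by
    have : 0 ≤ K * δ ^ (1 - p) := by positivity
    linarith
  obtain ⟨B, hB⟩ : ∃ B, B = 1 + K * δ ^ (1 - p) := ⟨_, rfl⟩
  rw [← hB] at hB1 ⊢
  have hpos : ∀ M ∈ Set.Ico (1 : ℝ) T, 0 < δ + F M := fun M hM => by
    have := hF M hM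
    linarith
  have hder : ∀ M ∈ Set.Ico (1 : ℝ) T,
      HasDerivAt (fun M => K * (δ + F M) ^ (1 - p) + M ^ (1 - a))
        (K * (deriv F M * (1 - p) * (δ + F M) ^ (1 - p - 1)) + (1 - a) * M ^ (1 - a - 1)) M := by
    intro M hM
    have hM0 : M ≠ 0 := by have := hM.1; linarith
    have h1 := (((hd M hM).hasDerivAt.const_add δ).rpow_const (p := 1 - p)
      (Or.inl (hpos M hM).ne')).const_mul K
    exact h1.add (Real.hasDerivAt_rpow_const (Or.inl hM0))
  have hanti : AntitoneOn (fun M => K * (δ + F M) ^ (1 - p) + M ^ (1 - a)) (Set.Ico 1 T) := by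
    apply antitoneOn_of_deriv_nonpos (convex_Ico 1 T)
    · exact fun M hM => (hder M hM).continuousAt.continuousWithinAt
    · exact fun M hM =>
        (hder M (interior_subset hM)).differentiableAt.differentiableWithinAt
    · intro M hM
      have hM := interior_subset hM
      rw [(hder M hM).deriv]
      have hM0 : 0 < M := by have := hM.1; linarith
      have h := hode M hM
      have e1 : (1 - p - 1 : ℝ) = -p := by ring
      have e2 : (1 - a - 1 : ℝ) = -a := by ring
      rw [e1, e2, Real.rpow_neg (hpos M hM).le, Real.rpow_neg hM0.le]
      have hx : 0 < (δ + F M) ^ p := Real.rpow_pos_of_pos (hpos M hM) p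
      have hy : 0 < M ^ a := Real.rpow_pos_of_pos hM0 a
      generalize (δ + F M) ^ p = x at *
      generalize M ^ a = y at *
      have h2 : C * y⁻¹ ≤ deriv F M * x⁻¹ := by
        rw [← div_eq_mul_inv, ← div_eq_mul_inv, div_le_div_iff₀ hy hx]
        linarith
      have h3 := mul_le_mul_of_nonneg_left h2 (mul_pos hKpos hp1).le
      rw [← hKC]
      linarith
  have hlt : ∀ M ∈ Set.Ico (1 : ℝ) T, M ^ (1 - a) < B := by
    intro M hM
    have h1 : (1 : ℝ) ∈ Set.Ico (1 : ℝ) T := ⟨le_rfl, hT⟩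
    have h := hanti h1 hM hM.1
    simp only [Real.one_rpow] at h
    have h2 : (δ + F 1) ^ (1 - p) ≤ δ ^ (1 - p) :=
      Real.rpow_le_rpow_of_nonpos hδ (by linarith [hF 1 h1]) (by linarith)
    have h3 := mul_le_mul_of_nonneg_left h2 hKpos.le
    have h4 : 0 < K * (δ + F M) ^ (1 - p) :=
      mul_pos hKpos (Real.rpow_pos_of_pos (hpos M hM) _)
    linarith
  have hB0 : 0 ≤ B := by linarith
  have hpow : (B ^ (1 / (1 - a))) ^ (1 - a) = B := by
    rw [← Real.rpow_mul hB0, one_div_mul_cancel h1a.ne', Real.rpow_one]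
  have hTB : T ≤ B ^ (1 / (1 - a)) := by
    by_contra hcon
    push Not at hcon
    have := hlt _ ⟨Real.one_le_rpow hB1 (by positivity), hcon⟩
    rw [hpow] at this
    exact lt_irrefl _ this
  constructor
  · calc T ^ (1 - a) ≤ (B ^ (1 / (1 - a))) ^ (1 - a) :=
        Real.rpow_le_rpow (by linarith) hTB h1a.le
      _ = B := hpow
  · obtain ⟨m, hm⟩ : ∃ m, m = max 1 (δ ^ (-(p - 1) / (1 - a))) := ⟨_, rfl⟩
    rw [← hm]
    have hm1 : 1 ≤ m := hm ▸ le_max_left _ _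
    have hm2 : δ ^ (-(p - 1) / (1 - a)) ≤ m := hm ▸ le_max_right _ _
    have hm0 : 0 ≤ m := by linarith
    have h1 : 1 ≤ m ^ (1 - a) := Real.one_le_rpow hm1 h1a.le
    have h2 : δ ^ (1 - p) ≤ m ^ (1 - a) := by
      have := Real.rpow_le_rpow (by positivity) hm2 h1a.le
      rw [← Real.rpow_mul hδ.le, div_mul_cancel₀ _ h1a.ne'] at this
      rwa [show 1 - p = -(p - 1) by ring]
    have h3 : B ≤ (1 + K) * m ^ (1 - a) := by
      have := mul_le_mul_of_nonneg_left h2 hKpos.le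
      rw [hB]; linarith
    calc T ≤ B ^ (1 / (1 - a)) := hTB
      _ ≤ ((1 + K) * m ^ (1 - a)) ^ (1 / (1 - a)) :=
        Real.rpow_le_rpow hB0 h3 (by positivity)
      _ = (1 + K) ^ (1 / (1 - a)) * m := by
        rw [Real.mul_rpow (by positivity) (by positivity), ← Real.rpow_mul hm0,
          mul_one_div_cancel h1a.ne', Real.rpow_one]
end

section
/- Let p > 1, C > 0, δ > 0, and T > 1. Suppose F : [1,T) → ℝ is differentiable with F(M) ≥ 0 and M F'(M) ≥ C (δ + F(M))^{p} for all M ∈ [1,T). Then ln T ≤ δ^{1−p}/(C(p−1)); in particular T ≤ exp(δ^{1−p}/(C(p−1))). -/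
open Real Set

/-- **ODE blow-up lemma, critical case** (Fino–Hamza): if `F ≥ 0` is differentiable on
`[1,T)` with `M F'(M) ≥ C (δ + F(M))^p` there, where `p > 1` and `C, δ > 0`, then
`ln T ≤ δ^{1-p}/(C(p-1))`; in particular `T ≤ exp(δ^{1-p}/(C(p-1)))`. -/
theorem ode_blowup_critical
    (p C : ℝ) (hp : 1 < p) (hC : 0 < C)
    (δ T : ℝ) (F : ℝ → ℝ) (hδ : 0 < δ) (hT : 1 < T)
    (hdiff : ∀ M ∈ Set.Ico (1 : ℝ) T, DifferentiableAt ℝ F M)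
    (hF0 : ∀ M ∈ Set.Ico (1 : ℝ) T, 0 ≤ F M)
    (hode : ∀ M ∈ Set.Ico (1 : ℝ) T, C * (δ + F M) ^ p ≤ M * deriv F M) :
    Real.log T ≤ δ ^ (1 - p) / (C * (p - 1)) ∧
    T ≤ Real.exp (δ ^ (1 - p) / (C * (p - 1))) := by
  have hp1 : 0 < p - 1 := by linarith
  have hK : 0 < C * (p - 1) := mul_pos hC hp1
  have hder : ∀ M ∈ Set.Ico (1 : ℝ) T,
      HasDerivAt (fun M => (δ + F M) ^ (1 - p) + C * (p - 1) * Real.log M)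
        (deriv F M * (1 - p) * (δ + F M) ^ (1 - p - 1) + C * (p - 1) * M⁻¹) M := by
    intro M hM
    have hpos : 0 < δ + F M := by linarith [hF0 M hM]
    have hM0 : M ≠ 0 := by linarith [hM.1]
    have h1 := ((hdiff M hM).hasDerivAt.const_add δ).rpow_const (p := 1 - p) (Or.inl hpos.ne')
    exact h1.add ((Real.hasDerivAt_log hM0).const_mul (C * (p - 1)))
  have hanti : AntitoneOn (fun M => (δ + F M) ^ (1 - p) + C * (p - 1) * Real.log M)
      (Set.Ico 1 T) := by
    apply antitoneOn_of_deriv_nonpos (convex_Ico 1 T)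
    · exact fun M hM => (hder M hM).continuousAt.continuousWithinAt
    · exact fun M hM => (hder M (interior_subset hM)).differentiableAt.differentiableWithinAt
    · intro M hM
      have hM' := interior_subset hM
      rw [(hder M hM').deriv]
      have hpos : 0 < δ + F M := by linarith [hF0 M hM']
      have hM0 : 0 < M := by linarith [hM'.1]
      have e : 1 - p - 1 = -p := by ring
      rw [e, Real.rpow_neg hpos.le]
      have hq : 0 < (δ + F M) ^ p := Real.rpow_pos_of_pos hpos p
      have ho := hode M hM'
      have : deriv F M * (1 - p) * ((δ + F M) ^ p)⁻¹ + C * (p - 1) * M⁻¹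
          = -((p - 1) * (M * deriv F M - C * (δ + F M) ^ p)) / (M * (δ + F M) ^ p) := by
        field_simp
        ring
      rw [this]
      apply div_nonpos_of_nonpos_of_nonneg
      · have := mul_nonneg hp1.le (sub_nonneg.2 ho)
        linarith
      · positivity
  have hlog : ∀ M ∈ Set.Ico (1 : ℝ) T, Real.log M ≤ δ ^ (1 - p) / (C * (p - 1)) := by
    intro M hM
    have h1 : (1 : ℝ) ∈ Set.Ico (1 : ℝ) T := ⟨le_refl _, hT⟩
    have h := hanti h1 hM hM.1
    simp only [Real.log_one, mul_zero, add_zero] at h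
    have hpos : 0 < δ + F M := by linarith [hF0 M hM]
    have hq : 0 < (δ + F M) ^ (1 - p) := Real.rpow_pos_of_pos hpos _
    have hle : (δ + F 1) ^ (1 - p) ≤ δ ^ (1 - p) :=
      Real.rpow_le_rpow_of_nonpos hδ (by linarith [hF0 1 h1]) (by linarith)
    rw [le_div_iff₀ hK]
    linarith
  have hTle : T ≤ Real.exp (δ ^ (1 - p) / (C * (p - 1))) := by
    by_contra! hlt
    have h1 : 1 < Real.exp (δ ^ (1 - p) / (C * (p - 1))) :=
      Real.one_lt_exp_iff.2 (div_pos (Real.rpow_pos_of_pos hδ _) hK)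
    obtain ⟨M, hM1, hM2⟩ := exists_between hlt
    have h2 := hlog M ⟨(h1.trans hM1).le, hM2⟩
    have h3 := (Real.log_le_iff_le_exp (by linarith)).1 h2
    linarith
  exact ⟨(Real.log_le_iff_le_exp (by linarith)).2 hTle, hTle⟩
end
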